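/- Let α ∈ (0,1) and let R : ℝ² → ℝ² be the map defined by R(x₁,x₂) = (x₁, −3x₂ + 4ψ(x₁)) on each R⁺_{n,k}, R(x₁,x₂) = (x₁, −x₂/3 + (4/3)ψ(x₁)) on each R⁻_{n,k}, and R(x₁,x₂) = (x₁,−x₂) elsewhere. Then: (i) R is bi-Lipschitz on every open set U ⊂ ℝ² with dist(U, Γ) > 0; (ii) there is a constant c > 0 such that at every x = (x₁,x₂) ∈ R⁺_{n,k} ∪ R⁻_{n,k} at which ψ is differentiable at x₁, R is differentiable with |DR(x)| ≤ c·dist(x₁, C)^{α−1}, and the Jacobian determinant satisfies |J_R(x)| = 3 for x ∈ R⁺_{n,k} and |J_R(x)| = 1/3 for x ∈ R⁻_{n,k}. -/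

import Mathlib

/-!
The formulas for `R` on `R⁺`, on `R⁻` and elsewhere are the pieces of a single involution `h_p` of
the vertical line, taken at height `p = ψ(x₁)`; it is Lipschitz jointly in the height `p` and the
point. At distance at least `ε` from `Γ` nothing changes if `ψ` is replaced by `max(ψ, ε/3)`:
wherever the two heights differ, both of them reflect the point by `t ↦ -t`. As
`max(ψ, ε/3) = max(dist(·, C), (ε/3)^(1/α))^α` on `(0, 1)`, the truncated height is Lipschitz, so
off the `ε`-neighbourhood of `Γ` the map `R` coincides with a Lipschitz involution of the plane,
and a Lipschitz involution is bi-Lipschitz.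

On `R⁺` and `R⁻` the differential is lower triangular with diagonal `(1, -3)` and `(1, -1/3)`, and
its off-diagonal entry is a multiple of `ψ'`, which is at most `α * dist(x₁, C)^(α - 1)` because the
distance function is `1`-Lipschitz.
-/

open MeasureTheory Set Metric Filter Topology
open scoped ENNReal NNReal

noncomputable section

/-- The cusp function `ψ(x) = dist(x, C)^α` on `(0,1)`, zero elsewhere; here `C = cantorSet`
is Mathlib's classical ternary Cantor set. -/
def psiC (α : ℝ) (x : ℝ) : ℝ :=
  if x ∈ Ioo (0 : ℝ) 1 then infDist x cantorSet ^ α else 0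

/-- The domain above the Cantor-cuspidal graph. -/
def OmegaPlus (α : ℝ) : Set (ℝ × ℝ) := {x | psiC α x.1 < x.2}

/-- The domain below the Cantor-cuspidal graph. -/
def OmegaMinus (α : ℝ) : Set (ℝ × ℝ) := {x | x.2 < psiC α x.1}

/-- The Cantor-cuspidal graph `Γ`. -/
def graphC (α : ℝ) : Set (ℝ × ℝ) := {x | x.2 = psiC α x.1}

/-- Left endpoints of the `2^n` level-`n` closed intervals of the ternary Cantor
construction (in bit-reversed order). -/
def lep : ℕ → ℕ → ℝ
  | 0, _ => 0
  | n + 1, k => lep n (k / 2) + ((k % 2 : ℕ) : ℝ) * 2 / 3 ^ (n + 1)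

/-- The removed middle-third open interval `I_{n+1}^{k+1}` (here `n ≥ 0`, `k < 2 ^ n`):
the open middle third of the level-`n` closed interval `[lep n k, lep n k + 3⁻ⁿ]`. -/
def Ink (n k : ℕ) : Set ℝ :=
  Ioo (lep n k + 1 / 3 ^ (n + 1)) (lep n k + 2 / 3 ^ (n + 1))

/-- The set `R⁺_{n,k}` above the graph over `I_{n+1}^{k+1}`. -/
def RP (α : ℝ) (n k : ℕ) : Set (ℝ × ℝ) :=
  {x | x.1 ∈ Ink n k ∧ psiC α x.1 < x.2 ∧ x.2 < 2 * psiC α x.1}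

/-- The set `R⁻_{n,k}` below the graph over `I_{n+1}^{k+1}`. -/
def RM (α : ℝ) (n k : ℕ) : Set (ℝ × ℝ) :=
  {x | x.1 ∈ Ink n k ∧ -(2 * psiC α x.1) < x.2 ∧ x.2 < psiC α x.1}

/-- The union `⋃_{n,k} R⁺_{n,k}`. -/
def RPall (α : ℝ) : Set (ℝ × ℝ) := ⋃ n, ⋃ k ∈ {k : ℕ | k < 2 ^ n}, RP α n k

/-- The union `⋃_{n,k} R⁻_{n,k}`. -/
def RMall (α : ℝ) : Set (ℝ × ℝ) := ⋃ n, ⋃ k ∈ {k : ℕ | k < 2 ^ n}, RM α n k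

open Classical in
/-- The explicit reflection over the Cantor-cuspidal graph `Γ`. -/
def reflMap (α : ℝ) (x : ℝ × ℝ) : ℝ × ℝ :=
  if x ∈ RPall α then (x.1, -3 * x.2 + 4 * psiC α x.1)
  else if x ∈ RMall α then (x.1, -x.2 / 3 + 4 / 3 * psiC α x.1)
  else (x.1, -x.2)

section CantorGaps

-- `lep` appends the last ternary digit, `preCantorSet` prepends the first one; the next two lemmas
-- translate the first recursion into the second.
lemma lep_succ_of_lt_two_pow {n k : ℕ} (hk : k < 2 ^ n) : lep (n + 1) k = lep n k / 3 := by
  induction n generalizing k with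
  | zero =>
    obtain rfl : k = 0 := by simpa using hk
    simp [lep]
  | succ n ih =>
    rw [lep, ih (by grind), lep, pow_succ (3 : ℝ) (n + 1)]
    field_simp

lemma lep_succ_add_two_pow {n k : ℕ} (hk : k < 2 ^ n) :
    lep (n + 1) (k + 2 ^ n) = (2 + lep n k) / 3 := by
  induction n generalizing k with
  | zero =>
    obtain rfl : k = 0 := by simpa using hk
    simp [lep]
  | succ n ih =>
    have hdiv : (k + 2 ^ (n + 1)) / 2 = k / 2 + 2 ^ n := by grind
    have hmod : (k + 2 ^ (n + 1)) % 2 = k % 2 := by grind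
    rw [lep, hdiv, hmod, ih (by grind), lep, pow_succ (3 : ℝ) (n + 1)]
    field_simp
    ring

lemma div_three_mem_Ink {n k : ℕ} (hk : k < 2 ^ n) {x : ℝ} (hx : x ∈ Ink n k) :
    x / 3 ∈ Ink (n + 1) k := by
  simp only [Ink, mem_Ioo, lep_succ_of_lt_two_pow hk, pow_succ _ (n + 1), ← div_div] at hx ⊢
  constructor <;> linarith

lemma two_add_div_three_mem_Ink {n k : ℕ} (hk : k < 2 ^ n) {x : ℝ} (hx : x ∈ Ink n k) :
    (2 + x) / 3 ∈ Ink (n + 1) (k + 2 ^ n) := by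
  simp only [Ink, mem_Ioo, lep_succ_add_two_pow hk, pow_succ _ (n + 1), ← div_div] at hx ⊢
  constructor <;> linarith

lemma exists_mem_Ink_of_notMem_preCantorSet {n : ℕ} {x : ℝ} (hx : x ∈ Icc (0 : ℝ) 1)
    (hxn : x ∉ preCantorSet n) : ∃ m k : ℕ, k < 2 ^ m ∧ x ∈ Ink m k := by
  induction n generalizing x with
  | zero => exact absurd hx hxn
  | succ n ih =>
    obtain ⟨hx₀, hx₁⟩ := hx
    rw [preCantorSet_succ, mem_union, not_or] at hxn
    rcases le_or_gt x (1 / 3) with hleft | hleft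
    · obtain ⟨m, k, hk, hm⟩ := ih (x := 3 * x) ⟨by linarith, by linarith⟩
        fun h => hxn.1 ⟨3 * x, h, by ring⟩
      refine ⟨m + 1, k, by grind, ?_⟩
      simpa using div_three_mem_Ink hk hm
    rcases le_or_gt (2 / 3) x with hright | hright
    · obtain ⟨m, k, hk, hm⟩ := ih (x := 3 * x - 2) ⟨by linarith, by linarith⟩
        fun h => hxn.2 ⟨3 * x - 2, h, by ring⟩
      refine ⟨m + 1, k + 2 ^ m, by grind, ?_⟩
      simpa using two_add_div_three_mem_Ink hk hm
    · exact ⟨0, 0, by simp, by constructor <;> simp only [lep] <;> linarith⟩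

lemma exists_mem_Ink_of_notMem_cantorSet {x : ℝ} (hx : x ∈ Icc (0 : ℝ) 1)
    (hxC : x ∉ cantorSet) : ∃ m k : ℕ, k < 2 ^ m ∧ x ∈ Ink m k := by
  obtain ⟨n, hn⟩ : ∃ n, x ∉ preCantorSet n := by simpa [cantorSet] using hxC
  exact exists_mem_Ink_of_notMem_preCantorSet hx hn

end CantorGaps

section RpowLipschitz

lemma lipschitzOnWith_rpow_Ici {α δ : ℝ} (hα₀ : 0 ≤ α) (hα₁ : α ≤ 1) (hδ : 0 < δ) :
    LipschitzOnWith (Real.toNNReal (α * δ ^ (α - 1))) (fun t : ℝ => t ^ α) (Ici δ) := by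
  refine (convex_Ici δ).lipschitzOnWith_of_nnnorm_hasDerivWithin_le
    (f' := fun t => α * t ^ (α - 1)) (fun t ht => ?_) fun t ht => ?_
  · exact (Real.hasDerivAt_rpow_const (.inl (hδ.trans_le ht).ne')).hasDerivWithinAt
  · have ht₀ : 0 < t := hδ.trans_le ht
    rw [← NNReal.coe_le_coe, coe_nnnorm, Real.norm_of_nonneg (by positivity),
      Real.coe_toNNReal _ (by positivity)]
    gcongr ?_ * ?_
    exact Real.rpow_le_rpow_of_nonpos hδ ht (by linarith)

lemma exists_lipschitzWith_max_rpow {X : Type*} [PseudoEMetricSpace X] {f : X → ℝ} {K : ℝ≥0}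
    (hf : LipschitzWith K f) (hf₀ : ∀ x, 0 ≤ f x) {α ε : ℝ} (hα₀ : 0 < α) (hα₁ : α ≤ 1)
    (hε : 0 < ε) : ∃ L, LipschitzWith L fun x => max (f x ^ α) ε := by
  set δ := ε ^ α⁻¹
  have hδ : 0 < δ := Real.rpow_pos_of_pos hε _
  have hmax : (fun x => max (f x ^ α) ε) = fun x => max (f x) δ ^ α := by
    funext x
    rw [← Real.rpow_inv_rpow hε.le hα₀.ne']
    exact ((Real.monotoneOn_rpow_Ici_of_exponent_nonneg hα₀.le).map_max (hf₀ x) hδ.le).symm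
  rw [hmax]
  exact ⟨_, lipschitzOnWith_univ.1 <| (lipschitzOnWith_rpow_Ici hα₀.le hα₁ hδ).comp
    (hf.max_const δ).lipschitzOnWith fun x _ => le_max_right (f x) δ⟩

lemma differentiableAt_of_rpow {E : Type*} [NormedAddCommGroup E] [NormedSpace ℝ E] {f : E → ℝ}
    {α : ℝ} {x : E} (hα : α ≠ 0) (hf₀ : ∀ y, 0 ≤ f y) (hx : f x ≠ 0)
    (h : DifferentiableAt ℝ (fun y => f y ^ α) x) : DifferentiableAt ℝ f x := by
  have hroot : f = fun y => (f y ^ α) ^ α⁻¹ :=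
    funext fun y => (Real.rpow_rpow_inv (hf₀ y) hα).symm
  rw [hroot]
  exact h.rpow_const (.inl ((Real.rpow_ne_zero (hf₀ x) hα).2 hx))

lemma abs_deriv_rpow_le_of_lipschitzWith {f : ℝ → ℝ} {K : ℝ≥0} (hf : LipschitzWith K f)
    (hf₀ : ∀ y, 0 ≤ f y) {α x : ℝ} (hα : α ≠ 0) (hx : f x ≠ 0)
    (h : DifferentiableAt ℝ (fun y => f y ^ α) x) :
    |deriv (fun y => f y ^ α) x| ≤ K * |α| * f x ^ (α - 1) := by
  have hfx := differentiableAt_of_rpow hα hf₀ hx h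
  have hpow : 0 ≤ f x ^ (α - 1) := Real.rpow_nonneg (hf₀ x) _
  rw [(hfx.hasDerivAt.rpow_const (.inl hx)).deriv, abs_mul, abs_mul, abs_of_nonneg hpow]
  gcongr
  exact norm_deriv_le_of_lipschitz hf

end RpowLipschitz

section GraphReflection

/-- The reflection `R` restricted to a vertical line that meets the graph at height `p ≥ 0`: the
decreasing piecewise linear map with slopes `-1, -1/3, -3, -1` and breakpoints `-2p, p, 2p`. It is
encoded as a lattice expression, which makes it visibly Lipschitz in `p` and `t` jointly; for
`p < 0` it degenerates to `t ↦ -t`. -/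
def fiberReflection (p t : ℝ) : ℝ :=
  max (-t) (min (-t / 3 + 4 / 3 * p) (-3 * t + 4 * p))

lemma fiberReflection_of_two_mul_le_abs {p t : ℝ} (ht : 2 * p ≤ |t|) :
    fiberReflection p t = -t := by
  rw [fiberReflection, max_eq_left]
  rcases le_abs.1 ht with ht | ht
  · exact (min_le_right _ _).trans (by linarith)
  · exact (min_le_left _ _).trans (by linarith)

lemma fiberReflection_of_mem_Icc_above {p t : ℝ} (ht : t ∈ Icc p (2 * p)) :
    fiberReflection p t = -3 * t + 4 * p := by
  obtain ⟨hpt, htp⟩ := ht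
  rw [fiberReflection, min_eq_right (by linarith), max_eq_right (by linarith)]

lemma fiberReflection_of_mem_Icc_below {p t : ℝ} (ht : t ∈ Icc (-(2 * p)) p) :
    fiberReflection p t = -t / 3 + 4 / 3 * p := by
  obtain ⟨hpt, htp⟩ := ht
  rw [fiberReflection, min_eq_left (by linarith), max_eq_right (by linarith)]

lemma involutive_fiberReflection (p : ℝ) : Function.Involutive (fiberReflection p) := by
  intro t
  rcases le_total (2 * p) |t| with hout | hin
  · rw [fiberReflection_of_two_mul_le_abs hout,
      fiberReflection_of_two_mul_le_abs (by rwa [abs_neg]), neg_neg]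
  obtain ⟨hlow, hup⟩ := abs_le.1 hin
  rcases le_total p t with hpt | htp
  · rw [fiberReflection_of_mem_Icc_above ⟨hpt, hup⟩,
      fiberReflection_of_mem_Icc_below ⟨by linarith, by linarith⟩]
    ring
  · rw [fiberReflection_of_mem_Icc_below ⟨hlow, htp⟩,
      fiberReflection_of_mem_Icc_above ⟨by linarith, by linarith⟩]
    ring

lemma fiberReflection_max {p t e : ℝ} (hp : 0 ≤ p) (h : 3 * e ≤ |t - p|) :
    fiberReflection (max p e) t = fiberReflection p t := by
  rcases le_total e p with hep | hpe
  · rw [max_eq_left hep]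
  · have ht : 2 * e ≤ |t| := by linarith [abs_sub t p, abs_of_nonneg hp]
    rw [max_eq_right hpe, fiberReflection_of_two_mul_le_abs ht,
      fiberReflection_of_two_mul_le_abs (by linarith)]

lemma lipschitzWith_uncurry_fiberReflection :
    LipschitzWith 7 (Function.uncurry fiberReflection) := by
  refine LipschitzWith.of_dist_le_mul fun ⟨p, s⟩ ⟨q, t⟩ => ?_
  have hpq : |p - q| ≤ dist (p, s) (q, t) := le_max_left _ _
  have hst : |s - t| ≤ dist (p, s) (q, t) := le_max_right _ _
  rw [abs_le] at hpq hst
  refine (abs_max_sub_max_le_max _ _ _ _).trans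
    (max_le ?_ ((abs_min_sub_min_le_max _ _ _ _).trans (max_le ?_ ?_)))
  all_goals
    rw [NNReal.coe_ofNat, abs_le]
    constructor <;> linarith

variable {X : Type*}

/-- The reflection of `X × ℝ` over the graph of `φ : X → ℝ` along the fibres `{x} × ℝ`. -/
def graphReflection (φ : X → ℝ) (x : X × ℝ) : X × ℝ := (x.1, fiberReflection (φ x.1) x.2)

lemma involutive_graphReflection (φ : X → ℝ) : Function.Involutive (graphReflection φ) :=
  fun x => Prod.ext rfl (involutive_fiberReflection (φ x.1) x.2)

lemma lipschitzWith_graphReflection [PseudoEMetricSpace X] {φ : X → ℝ} {L : ℝ≥0}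
    (hφ : LipschitzWith L φ) :
    LipschitzWith (max 1 (7 * max L 1)) (graphReflection φ) := by
  have hpair : LipschitzWith (max L 1) fun x : X × ℝ => (φ x.1, x.2) := by
    simpa using (hφ.comp .prod_fst).prodMk .prod_snd
  exact LipschitzWith.prod_fst.prodMk (lipschitzWith_uncurry_fiberReflection.comp hpair)

end GraphReflection

lemma dist_div_le_of_involutive {X : Type*} [PseudoMetricSpace X] {f : X → X} {K : ℝ≥0}
    (hf : LipschitzWith K f) (hinv : Function.Involutive f) (x y : X) :
    dist x y / K ≤ dist (f x) (f y) := by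
  refine div_le_of_le_mul₀ K.coe_nonneg dist_nonneg ?_
  simpa [hinv x, hinv y, mul_comm] using hf.dist_le_mul (f x) (f y)

section LowerTriangular

/-- The endomorphism of `ℝ × ℝ` with matrix `!![1, 0; a, b]`, the shape of the differential of
a map `(x₁, x₂) ↦ (x₁, g (x₁, x₂))`. -/
def lowerTriangular (a b : ℝ) : ℝ × ℝ →L[ℝ] ℝ × ℝ :=
  (ContinuousLinearMap.fst ℝ ℝ ℝ).prod
    (a • ContinuousLinearMap.fst ℝ ℝ ℝ + b • ContinuousLinearMap.snd ℝ ℝ ℝ)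

lemma det_lowerTriangular (a b : ℝ) : (lowerTriangular a b).det = b := by
  rw [ContinuousLinearMap.det, ← LinearMap.det_toMatrix (Module.Basis.finTwoProd ℝ),
    Matrix.det_fin_two]
  simp [lowerTriangular, LinearMap.toMatrix_apply]

lemma norm_lowerTriangular_le (a b : ℝ) : ‖lowerTriangular a b‖ ≤ max 1 (|a| + |b|) := by
  rw [lowerTriangular, ContinuousLinearMap.opNorm_prod]
  refine max_le_max (ContinuousLinearMap.norm_fst_le ℝ ℝ ℝ) ((norm_add_le _ _).trans ?_)
  rw [norm_smul, norm_smul, Real.norm_eq_abs, Real.norm_eq_abs]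
  gcongr
  · exact mul_le_of_le_one_right (abs_nonneg a) (ContinuousLinearMap.norm_fst_le ℝ ℝ ℝ)
  · exact mul_le_of_le_one_right (abs_nonneg b) (ContinuousLinearMap.norm_snd_le ℝ ℝ ℝ)

lemma hasFDerivAt_prodMk_mul_add_mul {f : ℝ → ℝ} {f' : ℝ} {x : ℝ × ℝ} (a b : ℝ)
    (hf : HasDerivAt f f' x.1) :
    HasFDerivAt (fun y : ℝ × ℝ => (y.1, b * y.2 + a * f y.1)) (lowerTriangular (a * f') b) x := by
  have hcomp : HasFDerivAt (fun y : ℝ × ℝ => f y.1) (f' • ContinuousLinearMap.fst ℝ ℝ ℝ) x :=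
    hf.comp_hasFDerivAt x hasFDerivAt_fst
  rw [lowerTriangular, add_comm, mul_smul]
  exact hasFDerivAt_fst.prodMk ((hasFDerivAt_snd.const_mul b).add (hcomp.const_mul a))

end LowerTriangular

section CuspFunction

lemma one_mem_cantorSet : (1 : ℝ) ∈ cantorSet := by
  refine mem_iInter.2 fun n => ?_
  induction n with
  | zero => simp
  | succ n ih => exact .inr ⟨1, ih, by norm_num⟩

lemma infDist_union_compl_Ioo {s : Set ℝ} {a b x : ℝ} (ha : a ∈ s) (hb : b ∈ s)
    (hx : x ∈ Icc a b) : infDist x (s ∪ (Ioo a b)ᶜ) = infDist x s := by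
  refine le_antisymm (infDist_le_infDist_of_subset subset_union_left ⟨a, ha⟩) ?_
  rw [le_infDist ⟨a, .inl ha⟩]
  rintro y (hy | hy)
  · exact infDist_le_dist_of_mem hy
  rcases le_or_gt y a with hya | hay
  · refine (infDist_le_dist_of_mem ha).trans ?_
    simpa only [dist_comm x] using Real.dist_right_le_of_mem_uIcc (mem_uIcc_of_le hya hx.1)
  · have hby : b ≤ y := not_lt.1 fun hyb => hy ⟨hay, hyb⟩
    refine (infDist_le_dist_of_mem hb).trans ?_
    exact Real.dist_left_le_of_mem_uIcc (mem_uIcc_of_le hx.2 hby)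

/-- The zero set of `ψ`, an enlargement of the Cantor set for which `ψ = dist(·, cuspSet)^α` holds
on all of `ℝ`. -/
def cuspSet : Set ℝ := cantorSet ∪ (Ioo 0 1)ᶜ

lemma infDist_cuspSet {x : ℝ} (hx : x ∈ Ioo (0 : ℝ) 1) :
    infDist x cuspSet = infDist x cantorSet :=
  infDist_union_compl_Ioo zero_mem_cantorSet one_mem_cantorSet (Ioo_subset_Icc_self hx)

variable {α : ℝ} {x : ℝ}

lemma psiC_eq_infDist_cuspSet_rpow (hα : α ≠ 0) :
    psiC α = fun x => infDist x cuspSet ^ α := by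
  funext x
  by_cases hx : x ∈ Ioo (0 : ℝ) 1
  · rw [psiC, if_pos hx, infDist_cuspSet hx]
  · rw [psiC, if_neg hx, infDist_zero_of_mem (.inr hx), Real.zero_rpow hα]

lemma psiC_nonneg (α x : ℝ) : 0 ≤ psiC α x := by
  unfold psiC
  split_ifs
  exacts [Real.rpow_nonneg infDist_nonneg _, le_rfl]

lemma psiC_pos_iff (hα : α ≠ 0) :
    0 < psiC α x ↔ x ∈ Ioo (0 : ℝ) 1 ∧ 0 < infDist x cantorSet := by
  by_cases hx : x ∈ Ioo (0 : ℝ) 1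
  · rw [psiC, if_pos hx, (Real.rpow_nonneg infDist_nonneg α).lt_iff_ne',
      Real.rpow_ne_zero infDist_nonneg hα, infDist_nonneg.lt_iff_ne', and_iff_right hx]
  · simp [psiC, hx]

lemma infDist_cantorSet_le_one (hx : x ∈ Icc (0 : ℝ) 1) : infDist x cantorSet ≤ 1 :=
  (infDist_le_dist_of_mem zero_mem_cantorSet).trans <| by
    simpa using Real.dist_le_of_mem_Icc_01 hx (left_mem_Icc.2 zero_le_one)

lemma exists_lipschitzWith_max_psiC (hα₀ : 0 < α) (hα₁ : α ≤ 1) {ε : ℝ} (hε : 0 < ε) :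
    ∃ L, LipschitzWith L fun x => max (psiC α x) ε := by
  rw [psiC_eq_infDist_cuspSet_rpow hα₀.ne']
  exact exists_lipschitzWith_max_rpow (lipschitz_infDist_pt cuspSet) (fun _ => infDist_nonneg)
    hα₀ hα₁ hε

lemma abs_deriv_psiC_le (hα : 0 < α) (hx : 0 < psiC α x) (hd : DifferentiableAt ℝ (psiC α) x) :
    |deriv (psiC α) x| ≤ α * infDist x cantorSet ^ (α - 1) := by
  obtain ⟨hx01, hdist⟩ := (psiC_pos_iff hα.ne').1 hx
  rw [← infDist_cuspSet hx01] at hdist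
  rw [psiC_eq_infDist_cuspSet_rpow hα.ne'] at hd ⊢
  simpa [infDist_cuspSet hx01, abs_of_pos hα] using
    abs_deriv_rpow_le_of_lipschitzWith (lipschitz_infDist_pt cuspSet) (fun _ => infDist_nonneg)
      hα.ne' hdist.ne' hd

lemma one_le_infDist_cantorSet_rpow (hα₀ : 0 < α) (hα₁ : α ≤ 1) (hx : 0 < psiC α x) :
    1 ≤ infDist x cantorSet ^ (α - 1) := by
  obtain ⟨hx01, hdist⟩ := (psiC_pos_iff hα₀.ne').1 hx
  exact Real.one_le_rpow_of_pos_of_le_one_of_nonpos hdist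
    (infDist_cantorSet_le_one (Ioo_subset_Icc_self hx01)) (by linarith)

lemma norm_lowerTriangular_mul_deriv_psiC_le (hα₀ : 0 < α) (hα₁ : α ≤ 1) (hx : 0 < psiC α x)
    (hd : DifferentiableAt ℝ (psiC α) x) (a b : ℝ) :
    ‖lowerTriangular (a * deriv (psiC α) x) b‖
      ≤ max 1 (|a| + |b|) * infDist x cantorSet ^ (α - 1) := by
  have hone := one_le_infDist_cantorSet_rpow hα₀ hα₁ hx
  set d := infDist x cantorSet ^ (α - 1)
  have hderiv : |deriv (psiC α) x| ≤ d :=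
    (abs_deriv_psiC_le hα₀ hx hd).trans (mul_le_of_le_one_left (by linarith) hα₁)
  calc ‖lowerTriangular (a * deriv (psiC α) x) b‖
      ≤ max 1 (|a| * |deriv (psiC α) x| + |b|) := by
        simpa only [abs_mul] using norm_lowerTriangular_le (a * deriv (psiC α) x) b
    _ ≤ max (1 * d) (|a| * d + |b| * d) := by
        gcongr
        · rwa [one_mul]
        · exact le_mul_of_one_le_right (abs_nonneg b) hone
    _ = max 1 (|a| + |b|) * d := by
        rw [← add_mul, max_mul_of_nonneg _ _ (by linarith)]

end CuspFunction

section Reflection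

variable {α : ℝ} {x : ℝ × ℝ}

lemma exists_mem_Ink_of_psiC_pos (hα : α ≠ 0) {x : ℝ} (hx : 0 < psiC α x) :
    ∃ n k : ℕ, k < 2 ^ n ∧ x ∈ Ink n k := by
  obtain ⟨hx01, hdist⟩ := (psiC_pos_iff hα).1 hx
  exact exists_mem_Ink_of_notMem_cantorSet (Ioo_subset_Icc_self hx01)
    fun hxC => hdist.ne' (infDist_zero_of_mem hxC)

lemma RP_subset_RPall {n k : ℕ} (hk : k < 2 ^ n) : RP α n k ⊆ RPall α :=
  subset_iUnion_of_subset n (subset_biUnion_of_mem hk)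

lemma RM_subset_RMall {n k : ℕ} (hk : k < 2 ^ n) : RM α n k ⊆ RMall α :=
  subset_iUnion_of_subset n (subset_biUnion_of_mem hk)

lemma mem_RPall_iff (hα : α ≠ 0) :
    x ∈ RPall α ↔ psiC α x.1 < x.2 ∧ x.2 < 2 * psiC α x.1 := by
  simp only [RPall, mem_iUnion, RP, mem_ofPred_eq]
  refine ⟨fun ⟨_, _, _, _, h⟩ => h, fun h => ?_⟩
  obtain ⟨n, k, hk, hx⟩ := exists_mem_Ink_of_psiC_pos hα (x := x.1) (by linarith)
  exact ⟨n, k, hk, hx, h⟩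

lemma mem_RMall_iff (hα : α ≠ 0) :
    x ∈ RMall α ↔ -(2 * psiC α x.1) < x.2 ∧ x.2 < psiC α x.1 := by
  simp only [RMall, mem_iUnion, RM, mem_ofPred_eq]
  refine ⟨fun ⟨_, _, _, _, h⟩ => h, fun h => ?_⟩
  obtain ⟨n, k, hk, hx⟩ := exists_mem_Ink_of_psiC_pos hα (x := x.1) (by linarith)
  exact ⟨n, k, hk, hx, h⟩

lemma disjoint_RPall_RMall (hα : α ≠ 0) : Disjoint (RPall α) (RMall α) :=
  disjoint_left.2 fun _ hP hM =>
    lt_asymm ((mem_RPall_iff hα).1 hP).1 ((mem_RMall_iff hα).1 hM).2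

lemma reflMap_of_mem_RPall (hx : x ∈ RPall α) :
    reflMap α x = (x.1, -3 * x.2 + 4 * psiC α x.1) :=
  if_pos hx

lemma reflMap_of_mem_RMall (hα : α ≠ 0) (hx : x ∈ RMall α) :
    reflMap α x = (x.1, -x.2 / 3 + 4 / 3 * psiC α x.1) := by
  rw [reflMap, if_neg (disjoint_right.1 (disjoint_RPall_RMall hα) hx), if_pos hx]

lemma reflMap_eq_graphReflection (hα : α ≠ 0) (hx : x ∉ graphC α) :
    reflMap α x = graphReflection (psiC α) x := by
  rw [graphReflection]
  by_cases hP : x ∈ RPall α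
  · obtain ⟨hlow, hup⟩ := (mem_RPall_iff hα).1 hP
    rw [reflMap_of_mem_RPall hP, fiberReflection_of_mem_Icc_above ⟨hlow.le, hup.le⟩]
  by_cases hM : x ∈ RMall α
  · obtain ⟨hlow, hup⟩ := (mem_RMall_iff hα).1 hM
    rw [reflMap_of_mem_RMall hα hM, fiberReflection_of_mem_Icc_below ⟨hlow.le, hup.le⟩]
  have hout : 2 * psiC α x.1 ≤ |x.2| := by
    rw [mem_RPall_iff hα] at hP
    rw [mem_RMall_iff hα] at hM
    have hne : x.2 ≠ psiC α x.1 := hx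
    grind
  rw [reflMap, if_neg hP, if_neg hM, fiberReflection_of_two_mul_le_abs hout]

lemma reflMap_eq_graphReflection_max (hα : α ≠ 0) {ε : ℝ} (hε : 0 < ε)
    (hx : ∀ y ∈ graphC α, ε ≤ dist x y) :
    reflMap α x = graphReflection (fun s => max (psiC α s) (ε / 3)) x := by
  have hfar : ε ≤ |x.2 - psiC α x.1| := by
    simpa [Prod.dist_eq, Real.dist_eq] using hx (x.1, psiC α x.1) rfl
  have hx' : x ∉ graphC α := fun h => by
    rw [h, sub_self, abs_zero] at hfar
    exact hε.not_ge hfar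
  rw [reflMap_eq_graphReflection hα hx', graphReflection, graphReflection,
    fiberReflection_max (psiC_nonneg α x.1) (by linarith)]

lemma exists_lipschitzWith_involutive_eq_reflMap (hα₀ : 0 < α) (hα₁ : α ≤ 1) {ε : ℝ}
    (hε : 0 < ε) : ∃ K : ℝ≥0, 1 ≤ K ∧ ∃ F : ℝ × ℝ → ℝ × ℝ, LipschitzWith K F ∧
      Function.Involutive F ∧ ∀ x, (∀ y ∈ graphC α, ε ≤ dist x y) → reflMap α x = F x := by
  obtain ⟨L, hL⟩ := exists_lipschitzWith_max_psiC hα₀ hα₁ (div_pos hε three_pos)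
  exact ⟨_, le_max_left _ _, _, lipschitzWith_graphReflection hL,
    involutive_graphReflection _, fun x => reflMap_eq_graphReflection_max hα₀.ne' hε⟩

lemma hasFDerivAt_reflMap_of_mem_RPall (hα : α ≠ 0) (hx : x ∈ RPall α) {ψ' : ℝ}
    (hψ : HasDerivAt (psiC α) ψ' x.1) :
    HasFDerivAt (reflMap α) (lowerTriangular (4 * ψ') (-3)) x := by
  have hψc : ContinuousAt (fun y : ℝ × ℝ => psiC α y.1) x :=
    hψ.continuousAt.comp' continuousAt_fst
  obtain ⟨hlow, hup⟩ := (mem_RPall_iff hα).1 hx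
  refine (hasFDerivAt_prodMk_mul_add_mul 4 (-3) hψ).congr_of_eventuallyEq ?_
  filter_upwards [hψc.eventually_lt continuousAt_snd hlow,
    continuousAt_snd.eventually_lt (hψc.const_mul 2) hup] with y hylow hyup
  exact reflMap_of_mem_RPall ((mem_RPall_iff hα).2 ⟨hylow, hyup⟩)

lemma hasFDerivAt_reflMap_of_mem_RMall (hα : α ≠ 0) (hx : x ∈ RMall α) {ψ' : ℝ}
    (hψ : HasDerivAt (psiC α) ψ' x.1) :
    HasFDerivAt (reflMap α) (lowerTriangular (4 / 3 * ψ') (-1 / 3)) x := by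
  have hψc : ContinuousAt (fun y : ℝ × ℝ => psiC α y.1) x :=
    hψ.continuousAt.comp' continuousAt_fst
  obtain ⟨hlow, hup⟩ := (mem_RMall_iff hα).1 hx
  refine (hasFDerivAt_prodMk_mul_add_mul (4 / 3) (-1 / 3) hψ).congr_of_eventuallyEq ?_
  filter_upwards [(hψc.const_mul 2).neg.eventually_lt continuousAt_snd hlow,
    continuousAt_snd.eventually_lt hψc hup] with y hylow hyup
  rw [reflMap_of_mem_RMall hα ((mem_RMall_iff hα).2 ⟨hylow, hyup⟩)]
  congr 1
  ring

lemma exists_hasFDerivAt_reflMap_of_mem_RPall (hα₀ : 0 < α) (hα₁ : α ≤ 1) (hx : x ∈ RPall α)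
    (hd : DifferentiableAt ℝ (psiC α) x.1) :
    ∃ D : ℝ × ℝ →L[ℝ] ℝ × ℝ, HasFDerivAt (reflMap α) D x ∧
      ‖D‖ ≤ 7 * infDist x.1 cantorSet ^ (α - 1) ∧ |D.det| = 3 := by
  obtain ⟨hlow, hup⟩ := (mem_RPall_iff hα₀.ne').1 hx
  refine ⟨_, hasFDerivAt_reflMap_of_mem_RPall hα₀.ne' hx hd.hasDerivAt, ?_, ?_⟩
  · refine (norm_lowerTriangular_mul_deriv_psiC_le hα₀ hα₁ (by linarith) hd 4 (-3)).trans_eq ?_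
    norm_num
  · norm_num [det_lowerTriangular]

lemma exists_hasFDerivAt_reflMap_of_mem_RMall (hα₀ : 0 < α) (hα₁ : α ≤ 1) (hx : x ∈ RMall α)
    (hd : DifferentiableAt ℝ (psiC α) x.1) :
    ∃ D : ℝ × ℝ →L[ℝ] ℝ × ℝ, HasFDerivAt (reflMap α) D x ∧
      ‖D‖ ≤ 7 * infDist x.1 cantorSet ^ (α - 1) ∧ |D.det| = 1 / 3 := by
  obtain ⟨hlow, hup⟩ := (mem_RMall_iff hα₀.ne').1 hx
  refine ⟨_, hasFDerivAt_reflMap_of_mem_RMall hα₀.ne' hx hd.hasDerivAt, ?_, ?_⟩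
  · refine (norm_lowerTriangular_mul_deriv_psiC_le hα₀ hα₁ (by linarith) hd
      (4 / 3) (-1 / 3)).trans (mul_le_mul_of_nonneg_right ?_ (Real.rpow_nonneg infDist_nonneg _))
    norm_num [abs_div]
  · norm_num [det_lowerTriangular, abs_div]

end Reflection

theorem reflMap_biLipschitz_and_derivative_general (α : ℝ) (hα₀ : 0 < α) (hα₁ : α ≤ 1) :
    (∀ U : Set (ℝ × ℝ),
      (∃ ε : ℝ, 0 < ε ∧ ∀ x ∈ U, ∀ y ∈ graphC α, ε ≤ dist x y) →
      ∃ K : ℝ, 1 ≤ K ∧ ∀ x ∈ U, ∀ y ∈ U,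
        dist x y / K ≤ dist (reflMap α x) (reflMap α y) ∧
        dist (reflMap α x) (reflMap α y) ≤ K * dist x y) ∧
    (∃ c : ℝ, 0 < c ∧ ∀ n k : ℕ, k < 2 ^ n → ∀ x ∈ RP α n k ∪ RM α n k,
      DifferentiableAt ℝ (psiC α) x.1 →
      ∃ D : ℝ × ℝ →L[ℝ] ℝ × ℝ, HasFDerivAt (reflMap α) D x ∧
        ‖D‖ ≤ c * infDist x.1 cantorSet ^ (α - 1) ∧
        (x ∈ RP α n k → |D.det| = 3) ∧ (x ∈ RM α n k → |D.det| = 1 / 3)) := by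
  refine ⟨?_, 7, by norm_num, ?_⟩
  · rintro U ⟨ε, hε, hU⟩
    obtain ⟨K, hK, F, hF, hinv, heq⟩ := exists_lipschitzWith_involutive_eq_reflMap hα₀ hα₁ hε
    refine ⟨K, hK, fun x hx y hy => ?_⟩
    rw [heq x (hU x hx), heq y (hU y hy)]
    exact ⟨dist_div_le_of_involutive hF hinv x y, hF.dist_le_mul x y⟩
  · have hdisj := disjoint_RPall_RMall hα₀.ne'
    rintro n k hk x (hx | hx) hd
    · obtain ⟨D, hD, hnorm, hdet⟩ :=
        exists_hasFDerivAt_reflMap_of_mem_RPall hα₀ hα₁ (RP_subset_RPall hk hx) hd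
      exact ⟨D, hD, hnorm, fun _ => hdet, fun hM =>
        absurd (RM_subset_RMall hk hM) (disjoint_left.1 hdisj (RP_subset_RPall hk hx))⟩
    · obtain ⟨D, hD, hnorm, hdet⟩ :=
        exists_hasFDerivAt_reflMap_of_mem_RMall hα₀ hα₁ (RM_subset_RMall hk hx) hd
      exact ⟨D, hD, hnorm, fun hP =>
        absurd (RM_subset_RMall hk hx) (disjoint_left.1 hdisj (RP_subset_RPall hk hP)),
        fun _ => hdet⟩

/-- (i) `reflMap` is bi-Lipschitz on every open set at positive distance from `Γ`;
(ii) there is `c > 0` such that at every point `x` of `R⁺_{n,k} ∪ R⁻_{n,k}` where `ψ` is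
differentiable at `x₁`, `reflMap` is differentiable with `‖D(reflMap)(x)‖ ≤ c·dist(x₁,C)^(α−1)`
and Jacobian determinant of absolute value `3` on `R⁺_{n,k}` and `1/3` on `R⁻_{n,k}`. -/
theorem reflMap_biLipschitz_and_derivative (α : ℝ) (hα₀ : 0 < α) (hα₁ : α < 1) :
    (∀ U : Set (ℝ × ℝ), IsOpen U →
      (∃ ε : ℝ, 0 < ε ∧ ∀ x ∈ U, ∀ y ∈ graphC α, ε ≤ dist x y) →
      ∃ K : ℝ, 1 ≤ K ∧ ∀ x ∈ U, ∀ y ∈ U,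
        dist x y / K ≤ dist (reflMap α x) (reflMap α y) ∧
        dist (reflMap α x) (reflMap α y) ≤ K * dist x y) ∧
    (∃ c : ℝ, 0 < c ∧ ∀ n k : ℕ, k < 2 ^ n → ∀ x ∈ RP α n k ∪ RM α n k,
      DifferentiableAt ℝ (psiC α) x.1 →
      ∃ D : ℝ × ℝ →L[ℝ] ℝ × ℝ, HasFDerivAt (reflMap α) D x ∧
        ‖D‖ ≤ c * infDist x.1 cantorSet ^ (α - 1) ∧
        (x ∈ RP α n k → |D.det| = 3) ∧ (x ∈ RM α n k → |D.det| = 1 / 3)) := by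
  obtain ⟨hLip, hderiv⟩ := reflMap_biLipschitz_and_derivative_general α hα₀ hα₁.le
  exact ⟨fun U _ => hLip U, hderiv⟩
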